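/- Let Γ be a Helly graph with vertex set V and graph metric d, let 𝒰 be a nonprincipal ultrafilter on ℕ, let b : ℕ → V be a sequence of basepoints, and let s : ℕ → ℝ be a sequence of positive reals tending to infinity. For each i ∈ ℕ let xᵢ : ℕ → V be a sequence such that n ↦ d(xᵢ(n), b(n))/s(n) is bounded, and let rᵢ ≥ 0 be reals such that for all i, j ∈ ℕ there exists a real c(i,j) ≤ rᵢ + rⱼ with n ↦ d(xᵢ(n), xⱼ(n))/s(n) tending to c(i,j) along 𝒰. Then there exists a sequence x : ℕ → V with n ↦ d(x(n), b(n))/s(n) bounded such that for every i ∈ ℕ there exists a real cᵢ ≤ rᵢ with n ↦ d(x(n), xᵢ(n))/s(n) tending to cᵢ along 𝒰. (This expresses that every asymptotic cone of a Helly graph satisfies the countable ball-intersection property of countable hyperconvexity.) -/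

import Mathlib

/-! Helly graphs are coarsely Helly metric spaces: rounding real radii up to integers enlarges the
balls by at most `1`, which becomes negligible after rescaling by `s → ∞`. It therefore suffices to
find, for almost every `n`, a vertex near the first `K n` of the given balls at scale `s n`,
with an error tending to `0` and with `K n → ∞`. Each finite subfamily of balls almost meets at
scale `s n` for almost every `n`, and a diagonal argument produces such a function `K`. -/

/-- A simple graph is Helly if it is connected and every pairwise intersecting family of
closed balls (with respect to the graph metric) has a common vertex. -/
def IsHellyGraph {V : Type*} (Γ : SimpleGraph V) : Prop :=
  Γ.Connected ∧
    ∀ {ι : Type} (v : ι → V) (r : ι → ℕ),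
      (∀ i j, Γ.dist (v i) (v j) ≤ r i + r j) → ∃ x : V, ∀ i, Γ.dist x (v i) ≤ r i

section AsymptoticCone

open Filter Topology

/-- A metric space is coarsely Helly with constant `δ` if every finite family of balls whose radii
satisfy the pairwise intersection inequality has a common point after all radii are enlarged
by `δ`. The case `i = j` of the inequality forces the radii to be nonnegative. -/
def IsCoarselyHelly (X : Type*) [PseudoMetricSpace X] (δ : ℝ) : Prop :=
  ∀ {ι : Type} [Finite ι] (v : ι → X) (R : ι → ℝ),
    (∀ i j, dist (v i) (v j) ≤ R i + R j) → ∃ y, ∀ i, dist y (v i) ≤ R i + δ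

/-- The vertex set of a Helly graph with its path metric, as a pseudometric space with real-valued
distance. -/
noncomputable abbrev IsHellyGraph.pseudoMetricSpace {V : Type*} {Γ : SimpleGraph V}
    (hΓ : IsHellyGraph Γ) : PseudoMetricSpace V where
  dist u v := Γ.dist u v
  dist_self u := by rw [SimpleGraph.dist_self, Nat.cast_zero]
  dist_comm u v := by rw [SimpleGraph.dist_comm]
  dist_triangle u v w := mod_cast hΓ.1.dist_triangle

theorem IsHellyGraph.isCoarselyHelly {V : Type*} {Γ : SimpleGraph V} (hΓ : IsHellyGraph Γ) :
    letI := hΓ.pseudoMetricSpace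
    IsCoarselyHelly V 1 := by
  intro ι _ v R hR
  have hR_nonneg (i : ι) : 0 ≤ R i := by
    have hii : (Γ.dist (v i) (v i) : ℝ) ≤ R i + R i := hR i i
    rw [SimpleGraph.dist_self, Nat.cast_zero] at hii
    linarith
  have hceil (i j : ι) : Γ.dist (v i) (v j) ≤ ⌈R i⌉₊ + ⌈R j⌉₊ := by
    have hij : (Γ.dist (v i) (v j) : ℝ) ≤ R i + R j := hR i j
    exact_mod_cast hij.trans (add_le_add (Nat.le_ceil _) (Nat.le_ceil _))
  obtain ⟨y, hy⟩ := hΓ.2 v (fun i => ⌈R i⌉₊) hceil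
  exact ⟨y, fun i => (Nat.cast_le.2 (hy i)).trans (Nat.ceil_lt_add_one (hR_nonneg i)).le⟩

theorem IsCoarselyHelly.exists_forall_dist_div_le {X : Type*} [PseudoMetricSpace X] {δ : ℝ}
    (hX : IsCoarselyHelly X δ) {ι : Type} [Finite ι] {t : ℝ} (ht : 0 < t) (v : ι → X) (R : ι → ℝ)
    (hR : ∀ i j, dist (v i) (v j) / t ≤ R i + R j) :
    ∃ y, ∀ i, dist y (v i) / t ≤ R i + δ / t := by
  obtain ⟨y, hy⟩ := hX v (fun i => R i * t) fun i j => by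
    rw [← add_mul]
    exact (div_le_iff₀ ht).1 (hR i j)
  refine ⟨y, fun i => ?_⟩
  rw [div_le_iff₀ ht, add_mul, div_mul_cancel₀ _ ht.ne']
  exact hy i

section

variable {α : Type*} {l : Filter α} {s : α → ℝ}

theorem ultrafilter_le_atTop_of_forall_ne_pure (𝒰 : Ultrafilter ℕ) (h𝒰 : ∀ a, 𝒰 ≠ pure a) :
    (𝒰 : Filter ℕ) ≤ atTop :=
  Nat.cofinite_eq_atTop ▸ 𝒰.le_cofinite_or_eq_pure.resolve_right fun ⟨a, ha⟩ => h𝒰 a ha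

theorem exists_tendsto_atTop_and_eventually (hs : Tendsto s l atTop) {P : ℕ → α → Prop}
    (hP : ∀ k, ∀ᶠ n in l, P k n) :
    ∃ K : α → ℕ, Tendsto K l atTop ∧ ∀ᶠ n in l, P (K n) n := by
  classical
  -- The largest `k ≤ s n` with `P k n`; the cutoff `s n` makes the maximum exist.
  refine ⟨fun n => Nat.findGreatest (P · n) ⌊s n⌋₊, tendsto_atTop.2 fun k => ?_, ?_⟩
  · have hfloor := (tendsto_nat_floor_atTop.comp hs).eventually_ge_atTop k
    filter_upwards [hfloor, hP k] with n hkn hPkn using Nat.le_findGreatest hkn hPkn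
  · filter_upwards [hP 0] with n hn using Nat.findGreatest_spec (P := (P · n)) (Nat.zero_le _) hn

theorem exists_tendsto_of_isBoundedUnder_of_nonneg (𝒰 : Ultrafilter α) {f : α → ℝ}
    (hf : IsBoundedUnder (· ≤ ·) 𝒰 f) (hf_nonneg : ∀ᶠ n in 𝒰, 0 ≤ f n) :
    ∃ a, Tendsto f 𝒰 (𝓝 a) := by
  obtain ⟨B, hB⟩ := hf.eventually_le
  have hmem : ∀ᶠ n in 𝒰, f n ∈ Set.Icc 0 B := hf_nonneg.and hB
  obtain ⟨a, -, ha⟩ := isCompact_Icc.ultrafilter_le_nhds (𝒰.map f) (le_principal_iff.2 hmem)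
  exact ⟨a, ha⟩

variable {X : Type*} [PseudoMetricSpace X]

theorem isBoundedUnder_dist_div_trans {u v w : α → X} (hs : ∀ᶠ n in l, 0 ≤ s n)
    (huv : IsBoundedUnder (· ≤ ·) l fun n => dist (u n) (v n) / s n)
    (hvw : IsBoundedUnder (· ≤ ·) l fun n => dist (v n) (w n) / s n) :
    IsBoundedUnder (· ≤ ·) l fun n => dist (u n) (w n) / s n := by
  refine (isBoundedUnder_le_add huv hvw).mono_le (hs.mono fun n hn => ?_)
  rw [Pi.add_apply, ← add_div]
  exact div_le_div_of_nonneg_right (dist_triangle _ _ _) hn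

theorem exists_eventuallyEq_forall_dist_div_le {y b : α → X}
    (hy : IsBoundedUnder (· ≤ ·) l fun n => dist (y n) (b n) / s n) :
    ∃ z : α → X, z =ᶠ[l] y ∧ ∃ B, ∀ n, dist (z n) (b n) / s n ≤ B := by
  classical
  obtain ⟨B, hB⟩ := hy.eventually_le
  refine ⟨fun n => if dist (y n) (b n) / s n ≤ B then y n else b n, ?_, max B 0, fun n => ?_⟩
  · filter_upwards [hB] with n hn using if_pos hn
  · dsimp only
    split_ifs with hn
    · exact hn.trans (le_max_left _ _)
    · rw [dist_self, zero_div]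
      exact le_max_right _ _

theorem IsCoarselyHelly.exists_forall_eventually_dist_div_le {δ : ℝ} (hX : IsCoarselyHelly X δ)
    [Nonempty X] (hs : Tendsto s l atTop) {x : ℕ → α → X} {r : ℕ → ℝ}
    (hdist : ∀ i j, ∀ ε > 0, ∀ᶠ n in l, dist (x i n) (x j n) / s n ≤ r i + r j + ε) :
    ∃ y : α → X, ∀ i, ∀ ε > 0, ∀ᶠ n in l, dist (y n) (x i n) / s n ≤ r i + ε := by
  let e (k : ℕ) : ℝ := 1 / (k + 1)
  have he_pos (k : ℕ) : 0 < e k := Nat.one_div_pos_of_nat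
  have hfinite (k : ℕ) : ∀ᶠ n in l, ∀ i j : Fin k,
      dist (x i n) (x j n) / s n ≤ (r i + e k) + (r j + e k) := by
    refine eventually_all.2 fun i => eventually_all.2 fun j => ?_
    filter_upwards [hdist i j (e k + e k) (add_pos (he_pos k) (he_pos k))] with n hn
    linarith
  obtain ⟨K, hK, hKn⟩ := exists_tendsto_atTop_and_eventually hs hfinite
  have hnear : ∀ᶠ n in l, ∃ y, ∀ i : Fin (K n),
      dist y (x i n) / s n ≤ r i + e (K n) + δ / s n := by
    filter_upwards [hKn, hs.eventually_gt_atTop 0] with n hn hsn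
    exact hX.exists_forall_dist_div_le hsn _ _ hn
  obtain ⟨y, hy⟩ := skolem.1 hnear
  refine ⟨y, fun i ε hε => ?_⟩
  have herror : Tendsto (fun n => e (K n) + δ / s n) l (𝓝 0) := by
    have he : Tendsto e atTop (𝓝 0) := tendsto_one_div_add_atTop_nhds_zero_nat
    rw [← add_zero (0 : ℝ)]
    exact (he.comp hK).add (hs.const_div_atTop δ)
  filter_upwards [hy, hK.eventually_gt_atTop i, herror.eventually_lt_const hε] with n hyn hi hn
  linarith [hyn ⟨i, hi⟩]

end

theorem helly_graph_asymptotic_cone_countably_hyperconvex_general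
    {X : Type*} [PseudoMetricSpace X] {δ : ℝ} (hX : IsCoarselyHelly X δ)
    {α : Type*} (𝒰 : Ultrafilter α) (b : α → X) (s : α → ℝ) (hs : Tendsto s 𝒰 atTop)
    (x : ℕ → α → X) (hx : IsBoundedUnder (· ≤ ·) 𝒰 fun n => dist (x 0 n) (b n) / s n)
    (r : ℕ → ℝ) (c : ℕ → ℕ → ℝ)
    (hc : ∀ i j, c i j ≤ r i + r j ∧
      Tendsto (fun n => dist (x i n) (x j n) / s n) 𝒰 (𝓝 (c i j))) :
    ∃ y : α → X, (∃ B, ∀ n, dist (y n) (b n) / s n ≤ B) ∧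
      ∀ i, ∃ a ≤ r i, Tendsto (fun n => dist (y n) (x i n) / s n) 𝒰 (𝓝 a) := by
  have hs_nonneg : ∀ᶠ n in 𝒰, 0 ≤ s n := hs.eventually_ge_atTop 0
  have : Nonempty X := 𝒰.neBot.nonempty.map b
  obtain ⟨z, hz⟩ := hX.exists_forall_eventually_dist_div_le hs fun i j ε hε =>
    (hc i j).2.eventually_le_const ((hc i j).1.trans_lt (lt_add_of_pos_right _ hε))
  have hz_bdd (i : ℕ) : IsBoundedUnder (· ≤ ·) 𝒰 fun n => dist (z n) (x i n) / s n :=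
    isBoundedUnder_of_eventually_le (hz i 1 one_pos)
  obtain ⟨y, hyz, hy⟩ := exists_eventuallyEq_forall_dist_div_le
    (isBoundedUnder_dist_div_trans hs_nonneg (hz_bdd 0) hx)
  refine ⟨y, hy, fun i => ?_⟩
  obtain ⟨a, ha⟩ := exists_tendsto_of_isBoundedUnder_of_nonneg 𝒰 (hz_bdd i)
    (hs_nonneg.mono fun n hn => div_nonneg dist_nonneg hn)
  refine ⟨a, le_of_forall_pos_le_add fun ε hε => le_of_tendsto ha (hz i ε hε), ha.congr' ?_⟩
  filter_upwards [hyz] with n hn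
  rw [hn]

end AsymptoticCone

/-- Asymptotic cones of Helly graphs are countably hyperconvex: given countably many
closed balls of the asymptotic cone (with respect to a nonprincipal ultrafilter `𝒰`,
basepoints `b` and scaling factors `s → ∞`), represented by sequences `xᵢ` of vertices and
radii `rᵢ` such that the distance in the cone between `xᵢ` and `xⱼ` is at most `rᵢ + rⱼ`
for all `i, j`, there is a point of the cone, represented by a sequence `y`, lying in all
of the balls. -/
theorem helly_graph_asymptotic_cone_countably_hyperconvex
    {V : Type*} (Γ : SimpleGraph V) (hΓ : IsHellyGraph Γ)
    (𝒰 : Ultrafilter ℕ) (h𝒰 : ∀ a : ℕ, 𝒰 ≠ pure a)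
    (b : ℕ → V) (s : ℕ → ℝ) (hs_pos : ∀ n, 0 < s n)
    (hs : Filter.Tendsto s Filter.atTop Filter.atTop)
    (x : ℕ → ℕ → V)
    (hx : ∀ i, ∃ B : ℝ, ∀ n, (Γ.dist (x i n) (b n) : ℝ) / s n ≤ B)
    (r : ℕ → ℝ) (hr : ∀ i, 0 ≤ r i)
    (c : ℕ → ℕ → ℝ)
    (hc : ∀ i j, c i j ≤ r i + r j ∧
      Filter.Tendsto (fun n => (Γ.dist (x i n) (x j n) : ℝ) / s n) 𝒰 (nhds (c i j))) :
    ∃ y : ℕ → V,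
      (∃ B : ℝ, ∀ n, (Γ.dist (y n) (b n) : ℝ) / s n ≤ B) ∧
      ∀ i, ∃ ci : ℝ, ci ≤ r i ∧
        Filter.Tendsto (fun n => (Γ.dist (y n) (x i n) : ℝ) / s n) 𝒰 (nhds ci) := by
  let _ := hΓ.pseudoMetricSpace
  exact helly_graph_asymptotic_cone_countably_hyperconvex_general hΓ.isCoarselyHelly 𝒰 b s
    (hs.mono_left (ultrafilter_le_atTop_of_forall_ne_pure 𝒰 h𝒰)) x
    (Filter.isBoundedUnder_of (hx 0)) r c hc
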